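/- Let (A, 𝔪, k) be a Gorenstein commutative Noetherian local ring, let M be a finitely generated A-module having reducible complexity, and let t be a natural number. If for every finitely generated A-module N having reducible complexity with cx N = t one has Ext^i_A(N,M) = 0 for all i ≫ 0, then cx M < t. -/

import Mathlib

open CategoryTheory Opposite Filter IsLocalRing

universe u

namespace ComplexityTest

variable (A : Type u) [CommRing A] [IsLocalRing A]

structure MinFreeRes (M : Type u) [AddCommGroup M] [Module A M] : Type u where
  b : ℕ → ℕ
  d : (n : ℕ) → ((Fin (b (n + 1)) → A) →ₗ[A] (Fin (b n) → A))
  aug : (Fin (b 0) → A) →ₗ[A] M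
  aug_surjective : Function.Surjective aug
  exact_zero : Function.Exact (d 0) aug
  exact_succ : ∀ n, Function.Exact (d (n + 1)) (d n)
  minimal : ∀ n x i, d n x i ∈ maximalIdeal A

variable (M : Type u) [AddCommGroup M] [Module A M]

def HasComplexityLE (t : ℕ) : Prop :=
  ∃ (R : MinFreeRes A M) (a : ℝ), ∀ᶠ n : ℕ in atTop, (R.b n : ℝ) ≤ a * (n : ℝ) ^ ((t : ℤ) - 1)

noncomputable def complexity : ℕ∞ :=
  sInf {c : ℕ∞ | ∃ t : ℕ, c = t ∧ HasComplexityLE A M t}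

def HasProjDimLE (t : ℕ) : Prop :=
  ∃ R : MinFreeRes A M, ∀ i, t < i → R.b i = 0

noncomputable def projDim : ℕ∞ :=
  sInf {c : ℕ∞ | ∃ t : ℕ, c = t ∧ HasProjDimLE A M t}

def HasFiniteProjDim : Prop :=
  ∃ t : ℕ, HasProjDimLE A M t

def IsSyzygyOf (S : Type u) [AddCommGroup S] [Module A S] : ℕ → Prop
  | 0 => Nonempty (S ≃ₗ[A] M)
  | 1 => ∃ R : MinFreeRes A M, Nonempty (S ≃ₗ[A] (LinearMap.ker R.aug))
  | (n + 2) => ∃ R : MinFreeRes A M, Nonempty (S ≃ₗ[A] (LinearMap.ker (R.d n)))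

variable {A M} in
def IsSES {K S : Type u} [AddCommGroup K] [Module A K] [AddCommGroup S] [Module A S]
    (f : M →ₗ[A] K) (g : K →ₗ[A] S) : Prop :=
  Function.Injective f ∧ Function.Exact f g ∧ Function.Surjective g

noncomputable def extModule (n : ℕ) (N : Type u) [AddCommGroup N] [Module A N] :
    ModuleCat A :=
  ((_root_.Ext A (ModuleCat.{u} A) n).obj (op (ModuleCat.of A M))).obj (ModuleCat.of A N)

def extVanish (n : ℕ) (N : Type u) [AddCommGroup N] [Module A N] : Prop :=
  Subsingleton (extModule A M n N)

/-- The `n`-th Tor module `Tor^A_n(M, N)`. -/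
noncomputable def torModule (n : ℕ) (N : Type u) [AddCommGroup N] [Module A N] :
    ModuleCat A :=
  ((Tor (ModuleCat.{u} A) n).obj (ModuleCat.of A M)).obj (ModuleCat.of A N)

/-- The vanishing `Tor^A_n(M, N) = 0`. -/
def torVanish (n : ℕ) (N : Type u) [AddCommGroup N] [Module A N] : Prop :=
  Subsingleton (torModule A M n N)

noncomputable def depth : ℕ∞ :=
  sInf {c : ℕ∞ | ∃ i : ℕ, c = i ∧ ¬ extVanish A (ResidueField A) i M}

variable {A}

/-- The category of modules of *free reducible complexity* over the local ring `A`.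
It is defined inductively: every finitely generated module of finite projective
dimension has free reducible complexity, and a finitely generated module `M` of finite
positive complexity has free reducible complexity provided there is a short exact
sequence `0 → M → K → Ω^n_A(M) → 0` (necessarily induced by a cohomology element
`η ∈ Ext^{n+1}_A(M,M)`) where `K` is a finitely generated module of free reducible
complexity with `cx K = cx M - 1`. -/
inductive HasFreeRedCxCat : ModuleCat.{u} A → Prop
  | of_finite_projDim (M : ModuleCat.{u} A) (hfg : Module.Finite A M)
      (h : HasFiniteProjDim A M) : HasFreeRedCxCat M
  | step (M K S : ModuleCat.{u} A) (n : ℕ)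
      (hfg : Module.Finite A M) (hKfg : Module.Finite A K)
      (hpos : 0 < complexity A M) (hfin : complexity A M ≠ ⊤)
      (hsyz : IsSyzygyOf A M S n)
      (f : M →ₗ[A] K) (g : K →ₗ[A] S) (hses : IsSES f g)
      (hcx : complexity A K = complexity A M - 1)
      (hK : HasFreeRedCxCat K) : HasFreeRedCxCat M

/-- The category of modules of *reducible complexity* over the local ring `A`: as for
free reducible complexity, but where in addition the reductions are required to
preserve depth. -/
inductive HasRedCxCat : ModuleCat.{u} A → Prop
  | of_finite_projDim (M : ModuleCat.{u} A) (hfg : Module.Finite A M)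
      (h : HasFiniteProjDim A M) : HasRedCxCat M
  | step (M K S : ModuleCat.{u} A) (n : ℕ)
      (hfg : Module.Finite A M) (hKfg : Module.Finite A K)
      (hpos : 0 < complexity A M) (hfin : complexity A M ≠ ⊤)
      (hsyz : IsSyzygyOf A M S n)
      (f : M →ₗ[A] K) (g : K →ₗ[A] S) (hses : IsSES f g)
      (hcx : complexity A K = complexity A M - 1)
      (hdepth : depth A K = depth A M)
      (hK : HasRedCxCat K) : HasRedCxCat M

variable (A)

/-- `M` has free reducible complexity. -/
def HasFreeRedCx (M : Type u) [AddCommGroup M] [Module A M] : Prop :=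
  HasFreeRedCxCat (ModuleCat.of A M)

/-- `M` has reducible complexity. -/
def HasRedCx (M : Type u) [AddCommGroup M] [Module A M] : Prop :=
  HasRedCxCat (ModuleCat.of A M)

/-- A Noetherian local ring is Gorenstein if it has finite injective dimension over
itself; by Bass' characterization, this is equivalent to the vanishing of
`Ext^i_A(k, A)` for all sufficiently large `i`. -/
def IsGorenstein : Prop :=
  ∃ n : ℕ, ∀ i : ℕ, n < i → extVanish A (ResidueField A) i A

end ComplexityTest

open ComplexityTest

namespace ComplexityTest

lemma root_ext_iff (A : Type u) [CommRing A] (X Y : ModuleCat.{u} A) (n : ℕ) :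
    Subsingleton (((_root_.Ext A (ModuleCat.{u} A) (n+1)).obj (op X)).obj Y) ↔
      Subsingleton (Abelian.Ext X Y (n+1)) := by
  let P := projectiveResolution X
  have e := P.isoExt (R := A) (n+1) Y
  rw [← ModuleCat.isZero_iff_subsingleton, e.isZero_iff,
    ← HomologicalComplex.exactAt_iff_isZero_homology,
    HomologicalComplex.exactAt_iff' _ n (n+1) (n+1+1) (by simp) (by simp),
    ShortComplex.moduleCat_exact_iff]
  constructor
  · intro H
    refine subsingleton_of_forall_eq 0 fun α => ?_
    obtain ⟨f, hf, rfl⟩ := P.extMk_surjective α (n+1+1) rfl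
    rw [P.extMk_eq_zero_iff f _ rfl hf n rfl]
    exact H f hf
  · intro H f hf
    exact (P.extMk_eq_zero_iff f (n+1+1) rfl hf n rfl).1 (Subsingleton.elim _ _)

lemma extVanish_iff (A : Type u) [CommRing A] (X Y : Type u)
    [AddCommGroup X] [Module A X] [AddCommGroup Y] [Module A Y] (n : ℕ) :
    extVanish A X (n+1) Y ↔
      Subsingleton (Abelian.Ext (ModuleCat.of A X) (ModuleCat.of A Y) (n+1)) :=
  root_ext_iff A _ _ n

/-- The short complex attached to an exact pair of linear maps. -/
abbrev sesC {A : Type u} [CommRing A] {X Y Z : ModuleCat.{u} A}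
    (f : X →ₗ[A] Y) (g : Y →ₗ[A] Z) (hfg : Function.Exact f g) :
    ShortComplex (ModuleCat.{u} A) :=
  ShortComplex.mk (ModuleCat.ofHom f) (ModuleCat.ofHom g)
    (by ext x; exact hfg.apply_apply_eq_zero x)

lemma sesC_shortExact {A : Type u} [CommRing A] {X Y Z : ModuleCat.{u} A}
    (f : X →ₗ[A] Y) (g : Y →ₗ[A] Z) (hf : Function.Injective f)
    (hfg : Function.Exact f g) (hg : Function.Surjective g) :
    (sesC f g hfg).ShortExact :=
  { exact := (ShortComplex.moduleCat_exact_iff _).2 (fun x hx => (hfg x).1 hx)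
    mono_f := (ModuleCat.mono_iff_injective _).2 hf
    epi_g := (ModuleCat.epi_iff_surjective _).2 hg }

end ComplexityTest

namespace ComplexityTest

/-- Middle vanishing, contravariant. -/
lemma ext_mid_contra {A : Type u} [CommRing A] {X₁ X₂ X₃ : ModuleCat.{u} A} (Y : ModuleCat.{u} A)
    (f : X₁ →ₗ[A] X₂) (g : X₂ →ₗ[A] X₃) (hf : Function.Injective f)
    (hfg : Function.Exact f g) (hg : Function.Surjective g) (i : ℕ)
    (h1 : Subsingleton (Abelian.Ext X₁ Y i)) (h3 : Subsingleton (Abelian.Ext X₃ Y i)) :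
    Subsingleton (Abelian.Ext X₂ Y i) := by
  have hS := sesC_shortExact f g hf hfg hg
  refine subsingleton_of_forall_eq 0 fun x => ?_
  obtain ⟨z, hz⟩ := Abelian.Ext.contravariant_sequence_exact₂ hS Y x (h1.elim _ _)
  have : z = 0 := h3.elim _ _
  rw [← hz, this, Abelian.Ext.comp_zero]

lemma ext_mid_co {A : Type u} [CommRing A] {X₁ X₂ X₃ : ModuleCat.{u} A} (Y : ModuleCat.{u} A)
    (f : X₁ →ₗ[A] X₂) (g : X₂ →ₗ[A] X₃) (hf : Function.Injective f)
    (hfg : Function.Exact f g) (hg : Function.Surjective g) (i : ℕ)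
    (h1 : Subsingleton (Abelian.Ext Y X₁ i)) (h3 : Subsingleton (Abelian.Ext Y X₃ i)) :
    Subsingleton (Abelian.Ext Y X₂ i) := by
  have hS := sesC_shortExact f g hf hfg hg
  refine subsingleton_of_forall_eq 0 fun x => ?_
  obtain ⟨z, hz⟩ := Abelian.Ext.covariant_sequence_exact₂ Y hS x (h3.elim _ _)
  have : z = 0 := h1.elim _ _
  rw [← hz, this, Abelian.Ext.zero_comp]

lemma ext_left_co {A : Type u} [CommRing A] {X₁ X₂ X₃ : ModuleCat.{u} A} (Y : ModuleCat.{u} A)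
    (f : X₁ →ₗ[A] X₂) (g : X₂ →ₗ[A] X₃) (hf : Function.Injective f)
    (hfg : Function.Exact f g) (hg : Function.Surjective g) (i : ℕ)
    (h2 : Subsingleton (Abelian.Ext Y X₂ (i + 1))) (h3 : Subsingleton (Abelian.Ext Y X₃ i)) :
    Subsingleton (Abelian.Ext Y X₁ (i + 1)) := by
  have hS := sesC_shortExact f g hf hfg hg
  refine subsingleton_of_forall_eq 0 fun x => ?_
  obtain ⟨z, hz⟩ := Abelian.Ext.covariant_sequence_exact₁ Y hS x (h2.elim _ _) rfl
  have : z = 0 := h3.elim _ _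
  rw [← hz, this, Abelian.Ext.zero_comp]

lemma ext_of_equiv_left {A : Type u} [CommRing A] {X Y Z : ModuleCat.{u} A} (e : X ≃ₗ[A] Y)
    (i : ℕ) (h : Subsingleton (Abelian.Ext Y Z i)) : Subsingleton (Abelian.Ext X Z i) := by
  refine subsingleton_of_forall_eq 0 fun x => ?_
  have : x = (Abelian.Ext.mk₀ e.toModuleIso.hom).comp
      ((Abelian.Ext.mk₀ e.toModuleIso.inv).comp x (zero_add i)) (zero_add i) := by
    rw [Abelian.Ext.mk₀_comp_mk₀_assoc, Iso.hom_inv_id, Abelian.Ext.mk₀_id_comp]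
  rw [this, h.elim ((Abelian.Ext.mk₀ e.toModuleIso.inv).comp x (zero_add i)) 0,
    Abelian.Ext.comp_zero]

lemma ext_of_equiv_right {A : Type u} [CommRing A] {X Y Z : ModuleCat.{u} A} (e : X ≃ₗ[A] Y)
    (i : ℕ) (h : Subsingleton (Abelian.Ext Z Y i)) : Subsingleton (Abelian.Ext Z X i) := by
  refine subsingleton_of_forall_eq 0 fun x => ?_
  have : x = (x.comp (Abelian.Ext.mk₀ e.toModuleIso.hom) (add_zero i)).comp
      (Abelian.Ext.mk₀ e.toModuleIso.inv) (add_zero i) := by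
    rw [Abelian.Ext.comp_assoc_of_second_deg_zero, Abelian.Ext.mk₀_comp_mk₀, Iso.hom_inv_id,
      Abelian.Ext.comp_mk₀_id]
  rw [this, h.elim (x.comp (Abelian.Ext.mk₀ e.toModuleIso.hom) (add_zero i)) 0,
    Abelian.Ext.zero_comp]

lemma ext_zero_left {A : Type u} [CommRing A] {X Z : ModuleCat.{u} A} (h : Subsingleton X)
    (i : ℕ) : Subsingleton (Abelian.Ext X Z i) := by
  refine subsingleton_of_forall_eq 0 fun x => ?_
  have h0 : 𝟙 X = 0 := by ext y; exact h.elim _ _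
  rw [← Abelian.Ext.mk₀_id_comp x, h0, Abelian.Ext.mk₀_zero, Abelian.Ext.zero_comp]

lemma ext_of_annihilator {A : Type u} [CommRing A] [IsNoetherianRing A] (Y : ModuleCat.{u} A)
    (n : ℕ) (I : Ideal A)
    (H : ∀ J > I, J.IsPrime → ∀ i > n, Subsingleton (Abelian.Ext (ModuleCat.of A (A ⧸ J)) Y i))
    (X : Type u) [AddCommGroup X] [Module A X] [hX : Module.Finite A X]
    (hI : I < Module.annihilator A X) (i : ℕ) (hi : i > n) :
    Subsingleton (Abelian.Ext (ModuleCat.of A X) Y i) := by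
  induction hX using IsNoetherianRing.induction_on_isQuotientEquivQuotientPrime with
  | subsingleton N => exact ext_zero_left (X := ModuleCat.of A N) ‹_› i
  | quotient N p e =>
    refine ext_of_equiv_left (X := ModuleCat.of A N) (Y := ModuleCat.of A (A ⧸ p.1)) e i
      (H _ ?_ p.2 i hi)
    rwa [e.annihilator_eq, Ideal.annihilator_quotient] at hI
  | exact N₁ N₂ N₃ f g hf hg hfg h1 h3 =>
    exact ext_mid_contra (X₁ := ModuleCat.of A N₁) (X₂ := ModuleCat.of A N₂)
      (X₃ := ModuleCat.of A N₃) Y f g hf hfg hg i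
      (h1 (hI.trans_le (f.annihilator_le_of_injective hf)))
      (h3 (hI.trans_le (g.annihilator_le_of_surjective hg)))

lemma ext_prime {A : Type u} [CommRing A] [IsLocalRing A] [IsNoetherianRing A]
    (Y : ModuleCat.{u} A) [Module.Finite A Y] (n : ℕ)
    (hk : ∀ i > n, Subsingleton (Abelian.Ext (ModuleCat.of A (ResidueField A)) Y i))
    (I : Ideal A) : I.IsPrime → ∀ i > n,
      Subsingleton (Abelian.Ext (ModuleCat.of A (A ⧸ I)) Y i) := by
  induction I using IsNoetherian.induction with
  | hgt I IH =>
  intro hI i hi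
  by_cases hm : I = maximalIdeal A
  · subst hm; exact hk i hi
  · obtain ⟨x, hxm, hxI⟩ := SetLike.exists_of_lt (lt_of_le_of_ne (le_maximalIdeal hI.ne_top) hm)
    let f : (A ⧸ I) →ₗ[A] (A ⧸ I) := x • LinearMap.id
    have hf : Function.Injective f := by
      rw [← LinearMap.ker_eq_bot, LinearMap.ker_eq_bot']
      intro y hy
      obtain ⟨y, rfl⟩ := Ideal.Quotient.mk_surjective y
      have : Ideal.Quotient.mk I (x * y) = 0 := hy
      rw [Ideal.Quotient.eq_zero_iff_mem] at this ⊢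
      exact (hI.mem_or_mem this).resolve_left hxI
    let g := (LinearMap.range f).mkQ
    have hfg : Function.Exact f g := LinearMap.exact_map_mkQ_range f
    have hg : Function.Surjective g := Submodule.mkQ_surjective _
    have hann : I < Module.annihilator A ((A ⧸ I) ⧸ LinearMap.range f) := by
      refine lt_of_le_of_ne ?_ ?_
      · calc I = Module.annihilator A (A ⧸ I) := Ideal.annihilator_quotient.symm
          _ ≤ _ := g.annihilator_le_of_surjective hg
      · intro h
        apply hxI
        rw [h, Module.mem_annihilator]
        intro y
        obtain ⟨y, rfl⟩ := hg y
        exact hfg.apply_apply_eq_zero y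
    have hQ := ext_of_annihilator Y n I IH _ hann (i + 1) (by lia)
    have hS := sesC_shortExact (X := ModuleCat.of A (A ⧸ I)) (Y := ModuleCat.of A (A ⧸ I))
      (Z := ModuleCat.of A ((A ⧸ I) ⧸ LinearMap.range f)) f g hf hfg hg
    have hsurj : ∀ y : Abelian.Ext (ModuleCat.of A (A ⧸ I)) Y i, ∃ z, x • z = y := by
      intro y
      obtain ⟨z, hz⟩ := Abelian.Ext.contravariant_sequence_exact₁ hS Y y (add_comm 1 i)
        (hQ.elim _ _)
      refine ⟨z, ?_⟩
      rw [← hz]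
      have : (sesC (X := ModuleCat.of A (A ⧸ I)) (Y := ModuleCat.of A (A ⧸ I))
        (Z := ModuleCat.of A ((A ⧸ I) ⧸ LinearMap.range f)) f g hfg).f = x • 𝟙 _ := rfl
      rw [this]
      erw [Abelian.Ext.mk₀_smul, Abelian.Ext.smul_comp, Abelian.Ext.mk₀_id_comp]
    have hfin : Module.Finite A (Abelian.Ext (ModuleCat.of A (A ⧸ I)) Y i) :=
      have : Module.Finite A (ModuleCat.of A (A ⧸ I)) := inferInstanceAs (Module.Finite A (A ⧸ I))
      ModuleCat.finite_ext A _ _ i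
    have := Submodule.eq_bot_of_le_smul_of_le_jacobson_bot (maximalIdeal A)
      (⊤ : Submodule A (Abelian.Ext (ModuleCat.of A (A ⧸ I)) Y i)) hfin.1
      (fun y _ => by
        obtain ⟨z, rfl⟩ := hsurj y
        exact Submodule.smul_mem_smul hxm trivial)
      (by rw [IsLocalRing.jacobson_eq_maximalIdeal _ bot_ne_top])
    exact subsingleton_of_forall_eq 0 fun y => by
      have : y ∈ (⊤ : Submodule A (Abelian.Ext (ModuleCat.of A (A ⧸ I)) Y i)) := trivial
      simpa [*] using this

lemma ext_gor {A : Type u} [CommRing A] [IsLocalRing A] [IsNoetherianRing A]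
    (hA : IsGorenstein A) : ∃ n, ∀ (X : Type u) [AddCommGroup X] [Module A X] [Module.Finite A X],
      ∀ i > n, Subsingleton (Abelian.Ext (ModuleCat.of A X) (ModuleCat.of A A) i) := by
  obtain ⟨n, hn⟩ := hA
  have hk : ∀ i > n, Subsingleton
      (Abelian.Ext (ModuleCat.of A (ResidueField A)) (ModuleCat.of A A) i) := by
    intro i hi
    obtain ⟨j, rfl⟩ : ∃ j, i = j + 1 := ⟨i - 1, by lia⟩
    exact (extVanish_iff A _ _ j).1 (hn _ hi)
  have : Module.Finite A (ModuleCat.of A A) := inferInstanceAs (Module.Finite A A)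
  refine ⟨n, fun X _ _ hX i hi => ?_⟩
  induction hX using IsNoetherianRing.induction_on_isQuotientEquivQuotientPrime with
  | subsingleton N => exact ext_zero_left (X := ModuleCat.of A N) ‹_› i
  | quotient N p e =>
    exact ext_of_equiv_left (X := ModuleCat.of A N) (Y := ModuleCat.of A (A ⧸ p.1)) e i
      (ext_prime _ n hk _ p.2 i hi)
  | exact N₁ N₂ N₃ f g hf hg hfg h1 h3 =>
    exact ext_mid_contra (X₁ := ModuleCat.of A N₁) (X₂ := ModuleCat.of A N₂)
      (X₃ := ModuleCat.of A N₃) _ f g hf hfg hg i h1 h3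

lemma ext_pi {A : Type u} [CommRing A] (X : ModuleCat.{u} A) (i b : ℕ)
    (h : Subsingleton (Abelian.Ext X (ModuleCat.of A A) i)) :
    Subsingleton (Abelian.Ext X (ModuleCat.of A (Fin b → A)) i) := by
  refine subsingleton_of_forall_eq 0 fun x => ?_
  let p (j : Fin b) : ModuleCat.of A (Fin b → A) ⟶ ModuleCat.of A A :=
    ModuleCat.ofHom (LinearMap.proj j)
  let q (j : Fin b) : ModuleCat.of A A ⟶ ModuleCat.of A (Fin b → A) :=
    ModuleCat.ofHom (LinearMap.single A (fun _ => A) j)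
  have h1 : 𝟙 (ModuleCat.of A (Fin b → A)) = ∑ j, p j ≫ q j := by
    apply ModuleCat.hom_ext
    apply LinearMap.ext
    intro y
    funext k
    simp [p, q, ModuleCat.hom_sum, LinearMap.sum_apply, Pi.single_apply]
  have h2 : x.comp (Abelian.Ext.mk₀ (∑ j, p j ≫ q j)) (add_zero i) = 0 := by
    have : Abelian.Ext.mk₀ (∑ j, p j ≫ q j) = ∑ j, Abelian.Ext.mk₀ (p j ≫ q j) :=
      map_sum Abelian.Ext.addEquiv₀.symm _ _
    rw [this]
    have h3 := map_sum (Abelian.Ext.bilinearCompOfLinear A X _ _ i 0 i (add_zero i) x)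
      (fun j => Abelian.Ext.mk₀ (p j ≫ q j)) Finset.univ
    refine h3.trans (Finset.sum_eq_zero fun j _ => ?_)
    change x.comp _ (add_zero i) = 0
    rw [← Abelian.Ext.mk₀_comp_mk₀, ← Abelian.Ext.comp_assoc_of_second_deg_zero,
      h.elim (x.comp (Abelian.Ext.mk₀ (p j)) (add_zero i)) 0, Abelian.Ext.zero_comp]
  rwa [← h1, Abelian.Ext.comp_mk₀_id] at h2

end ComplexityTest

namespace ComplexityTest

/-- Shift of a minimal resolution. -/
def MinFreeRes.shift {A : Type u} [CommRing A] [IsLocalRing A] {M : Type u} [AddCommGroup M]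
    [Module A M] (R : MinFreeRes A M) : MinFreeRes A (LinearMap.ker R.aug) where
  b n := R.b (n + 1)
  d n := R.d (n + 1)
  aug := (R.d 0).codRestrict (LinearMap.ker R.aug)
    (fun x => R.exact_zero.apply_apply_eq_zero x)
  aug_surjective := by
    rintro ⟨y, hy⟩
    obtain ⟨x, rfl⟩ := (R.exact_zero y).1 hy
    exact ⟨x, rfl⟩
  exact_zero := by
    intro x
    rw [← R.exact_succ 0 x]
    exact Subtype.ext_iff
  exact_succ n := R.exact_succ (n + 1)
  minimal n := R.minimal (n + 1)

lemma syz_succ {A : Type u} [CommRing A] [IsLocalRing A] {M S : Type u} [AddCommGroup M]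
    [Module A M] [AddCommGroup S] [Module A S] (n : ℕ) (h : IsSyzygyOf A M S (n + 1)) :
    ∃ R : MinFreeRes A M, IsSyzygyOf A (LinearMap.ker R.aug) S n := by
  match n, h with
  | 0, ⟨R, h⟩ => exact ⟨R, h⟩
  | 1, ⟨R, ⟨e⟩⟩ =>
    have : LinearMap.ker (R.shift.aug) = LinearMap.ker (R.d 0) := LinearMap.ker_codRestrict _ _ _
    exact ⟨R, R.shift, ⟨e.trans (LinearEquiv.ofEq _ _ this.symm)⟩⟩
  | n + 2, ⟨R, h⟩ => exact ⟨R, R.shift, h⟩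

lemma aug_exact {A : Type u} [CommRing A] [IsLocalRing A] {M : Type u} [AddCommGroup M]
    [Module A M] (R : MinFreeRes A M) :
    Function.Exact (LinearMap.ker R.aug).subtype R.aug := by
  intro x
  simp

lemma aug_ses {A : Type u} [CommRing A] [IsLocalRing A] {M : Type u} [AddCommGroup M]
    [Module A M] (R : MinFreeRes A M) :
    (sesC (X := ModuleCat.of A (LinearMap.ker R.aug)) (Y := ModuleCat.of A (Fin (R.b 0) → A))
      (Z := ModuleCat.of A M) (LinearMap.ker R.aug).subtype R.aug (aug_exact R)).ShortExact :=
  sesC_shortExact _ _ (Submodule.subtype_injective _) _ R.aug_surjective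

instance projFin {A : Type u} [CommRing A] (b : ℕ) :
    Projective (ModuleCat.of A (Fin b → A)) :=
  (IsProjective.iff_projective (R := A) (Fin b → A)).1 inferInstance

/-- Vanishing passes to syzygies of the second argument. -/
lemma ext_syz {A : Type u} [CommRing A] [IsLocalRing A] (X : ModuleCat.{u} A)
    (hX : ∀ᶠ i in atTop, Subsingleton (Abelian.Ext X (ModuleCat.of A A) i))
    (n : ℕ) : ∀ (M S : Type u) [AddCommGroup M] [Module A M] [AddCommGroup S] [Module A S],
      IsSyzygyOf A M S n →
      (∀ᶠ i in atTop, Subsingleton (Abelian.Ext X (ModuleCat.of A M) i)) →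
      ∀ᶠ i in atTop, Subsingleton (Abelian.Ext X (ModuleCat.of A S) i) := by
  induction n with
  | zero =>
    rintro M S _ _ _ _ ⟨e⟩ h
    filter_upwards [h] with i hi
    exact ext_of_equiv_right (X := ModuleCat.of A S) (Y := ModuleCat.of A M) e i hi
  | succ n ih =>
    intro M S _ _ _ _ hS h
    obtain ⟨R, hR⟩ := syz_succ n hS
    refine ih _ S hR ?_
    obtain ⟨a, ha⟩ := eventually_atTop.1 (hX.and h)
    refine eventually_atTop.2 ⟨a + 1, fun i hi => ?_⟩
    obtain ⟨j, rfl⟩ : ∃ j, i = j + 1 := ⟨i - 1, by lia⟩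
    exact ext_left_co (X₁ := ModuleCat.of A (LinearMap.ker R.aug))
      (X₂ := ModuleCat.of A (Fin (R.b 0) → A)) (X₃ := ModuleCat.of A M) X _ _
      (Submodule.subtype_injective _) (aug_exact R) R.aug_surjective j
      (ext_pi X _ _ (ha (j + 1) (by lia)).1) (ha j (by lia)).2

lemma complexity_eq_zero {A : Type u} [CommRing A] [IsLocalRing A] {M : Type u} [AddCommGroup M]
    [Module A M] (h : HasFiniteProjDim A M) : complexity A M = 0 := by
  obtain ⟨t, R, hR⟩ := h
  refine le_antisymm (sInf_le ⟨0, rfl, R, 0, ?_⟩) bot_le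
  refine eventually_atTop.2 ⟨t + 1, fun i hi => ?_⟩
  rw [hR i (by lia)]
  simp

lemma complexity_le {A : Type u} [CommRing A] [IsLocalRing A] {M : Type u} [AddCommGroup M]
    [Module A M] {t : ℕ} (h : HasComplexityLE A M t) : complexity A M ≤ t :=
  sInf_le ⟨t, rfl, h⟩

lemma hasComplexityLE_of_eq {A : Type u} [CommRing A] [IsLocalRing A] {M : Type u}
    [AddCommGroup M] [Module A M] {t : ℕ} (h : complexity A M = t) : HasComplexityLE A M t := by
  have hne : {c : ℕ∞ | ∃ t : ℕ, c = t ∧ HasComplexityLE A M t}.Nonempty := by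
    by_contra hc
    rw [Set.not_nonempty_iff_eq_empty] at hc
    rw [complexity, hc, sInf_empty] at h
    exact absurd h.symm (ENat.natCast_ne_top t)
  obtain ⟨t', h1, h2⟩ := csInf_mem hne
  have : (t : ℕ∞) = t' := h.symm.trans h1
  rw [Nat.cast_inj] at this
  exact this ▸ h2

lemma chain {A : Type u} [CommRing A] [IsLocalRing A] (M : ModuleCat.{u} A)
    (hM : HasRedCxCat M) (t : ℕ) (ht : 0 < t) (hle : (t : ℕ∞) ≤ complexity A M) :
    ∃ N : ModuleCat.{u} A, HasRedCxCat N ∧ Module.Finite A N ∧ complexity A N = t ∧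
      ∀ X : ModuleCat.{u} A,
        (∀ᶠ i in atTop, Subsingleton (Abelian.Ext X (ModuleCat.of A A) i)) →
        (∀ᶠ i in atTop, Subsingleton (Abelian.Ext X M i)) →
        ∀ᶠ i in atTop, Subsingleton (Abelian.Ext X N i) := by
  induction hM with
  | of_finite_projDim M hfg h =>
    rw [complexity_eq_zero h] at hle
    have : t ≤ 0 := by exact_mod_cast hle
    lia
  | step M K S n hfg hKfg hpos hfin hsyz f g hses hcx hdepth hK ih =>
    by_cases hc : complexity A M = t
    · exact ⟨M, .step M K S n hfg hKfg hpos hfin hsyz f g hses hcx hdepth hK, hfg, hc,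
        fun X _ h => h⟩
    · obtain ⟨c, hcc⟩ := ENat.ne_top_iff_exists.1 hfin
      have hle' : (t : ℕ∞) ≤ complexity A K := by
        rw [hcx, ← hcc]
        rw [← hcc] at hle hc
        norm_cast at hle hc ⊢
        lia
      obtain ⟨N, h1, h2, h3, h4⟩ := ih hle'
      refine ⟨N, h1, h2, h3, fun X hX hXM => h4 X hX ?_⟩
      filter_upwards [hXM, ext_syz X hX n M S hsyz hXM] with i hi hi'
      exact ext_mid_co X f g hses.1 hses.2.1 hses.2.2 i hi hi'

lemma growth (bN bK : ℕ → ℕ) (m s : ℕ) (H : ∀ i, bN i ≤ ∑ j ∈ Finset.range m, bK (i + j * s))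
    (a : ℝ) (e : ℤ) (ha : ∀ᶠ n : ℕ in atTop, (bK n : ℝ) ≤ a * (n : ℝ) ^ e) :
    ∃ a' : ℝ, ∀ᶠ n : ℕ in atTop, (bN n : ℝ) ≤ a' * (n : ℝ) ^ e := by
  obtain ⟨n0, hn0⟩ := eventually_atTop.1 ha
  refine ⟨m * (|a| * max 1 (2 ^ e)), eventually_atTop.2 ⟨n0 + m * s + 1, fun i hi => ?_⟩⟩
  have hi0 : (0 : ℝ) < i := by exact_mod_cast (by lia : 0 < i)
  have key : ∀ j ∈ Finset.range m, (bK (i + j * s) : ℝ) ≤ |a| * max 1 (2 ^ e) * (i : ℝ) ^ e := by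
    intro j hj
    have hj' : j * s ≤ m * s := Nat.mul_le_mul_right _ (Finset.mem_range.1 hj).le
    have h1 : ((i + j * s : ℕ) : ℝ) ≤ 2 * i := by exact_mod_cast (by lia : i + j * s ≤ 2 * i)
    have h2 : (i : ℝ) ≤ ((i + j * s : ℕ) : ℝ) := by exact_mod_cast (by lia : i ≤ i + j * s)
    have hpow : ((i + j * s : ℕ) : ℝ) ^ e ≤ max 1 (2 ^ e) * (i : ℝ) ^ e := by
      rcases le_or_gt 0 e with he | he
      · calc ((i + j * s : ℕ) : ℝ) ^ e ≤ (2 * i) ^ e := zpow_le_zpow_left₀ he (by positivity) h1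
          _ = 2 ^ e * (i : ℝ) ^ e := mul_zpow _ _ _
          _ ≤ _ := by gcongr; exact le_max_right _ _
      · calc ((i + j * s : ℕ) : ℝ) ^ e ≤ (i : ℝ) ^ e := by
              obtain ⟨k, rfl⟩ : ∃ k : ℕ, e = -(k : ℤ) := ⟨e.natAbs, by lia⟩
              rw [zpow_neg, zpow_neg, zpow_natCast, zpow_natCast]
              gcongr
          _ = 1 * (i : ℝ) ^ e := (one_mul _).symm
          _ ≤ _ := by gcongr; exact le_max_left _ _
    calc (bK (i + j * s) : ℝ) ≤ a * ((i + j * s : ℕ) : ℝ) ^ e := hn0 _ (by lia)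
      _ ≤ |a| * ((i + j * s : ℕ) : ℝ) ^ e := by gcongr; exact le_abs_self a
      _ ≤ |a| * (max 1 (2 ^ e) * (i : ℝ) ^ e) := by gcongr
      _ = _ := by ring
  calc (bN i : ℝ) ≤ ∑ j ∈ Finset.range m, (bK (i + j * s) : ℝ) := by exact_mod_cast H i
    _ ≤ ∑ j ∈ Finset.range m, |a| * max 1 (2 ^ e) * (i : ℝ) ^ e := Finset.sum_le_sum key
    _ = _ := by simp; ring

end ComplexityTest

namespace ComplexityTest

lemma min_kill {A : Type u} [CommRing A] [IsLocalRing A] {M : Type u} [AddCommGroup M]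
    [Module A M] (R : MinFreeRes A M) (φ : (Fin (R.b 0) → A) →ₗ[A] ResidueField A)
    (y : Fin (R.b 0) → A) (hy : R.aug y = 0) : φ y = 0 := by
  obtain ⟨x, rfl⟩ := (R.exact_zero y).1 hy
  rw [LinearMap.pi_apply_eq_sum_univ φ]
  refine Finset.sum_eq_zero fun i _ => ?_
  rw [Algebra.smul_def]
  have : algebraMap A (ResidueField A) (R.d 0 x i) = 0 :=
    (residue_eq_zero_iff _).2 (R.minimal 0 x i)
  rw [this, zero_mul]

lemma length_res (A : Type u) [CommRing A] [IsLocalRing A] :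
    Module.length A (ResidueField A) = 1 := by
  rw [Module.length_eq_one_iff]
  exact isSimpleModule_iff_quot_maximal.2 ⟨maximalIdeal A, inferInstance, ⟨LinearEquiv.refl _ _⟩⟩

lemma betti_zero {A : Type u} [CommRing A] [IsLocalRing A] {M : Type u} [AddCommGroup M]
    [Module A M] (R : MinFreeRes A M) :
    Module.length A (Abelian.Ext (ModuleCat.of A M) (ModuleCat.of A (ResidueField A)) 0) =
      R.b 0 := by
  have e1 : Abelian.Ext (ModuleCat.of A M) (ModuleCat.of A (ResidueField A)) 0 ≃ₗ[A]
      (M →ₗ[A] ResidueField A) := Abelian.Ext.linearEquiv₀.trans ModuleCat.homLinearEquiv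
  have e2 : (M →ₗ[A] ResidueField A) ≃ₗ[A] ((Fin (R.b 0) → A) →ₗ[A] ResidueField A) := by
    refine LinearEquiv.ofBijective (LinearMap.lcomp A (ResidueField A) R.aug) ⟨?_, ?_⟩
    · intro φ ψ h
      ext x
      obtain ⟨x, rfl⟩ := R.aug_surjective x
      exact LinearMap.congr_fun h x
    · intro φ
      have hker : LinearMap.ker R.aug ≤ LinearMap.ker φ := fun y hy => min_kill R φ y hy
      refine ⟨(Submodule.liftQ _ φ hker) ∘ₗ
        (R.aug.quotKerEquivOfSurjective R.aug_surjective).symm.toLinearMap, ?_⟩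
      ext x : 1
      refine LinearMap.ext fun y => ?_
      simp
  have e3 := (Pi.basisFun A (Fin (R.b 0))).constr (M' := ResidueField A) A
  rw [(e1.trans (e2.trans e3.symm)).length_eq, Module.length_pi, length_res]
  simp

lemma betti {A : Type u} [CommRing A] [IsLocalRing A] (i : ℕ) :
    ∀ {M : Type u} [AddCommGroup M] [Module A M] (R : MinFreeRes A M),
    Module.length A (Abelian.Ext (ModuleCat.of A M) (ModuleCat.of A (ResidueField A)) i) =
      R.b i := by
  induction i with
  | zero => intro M _ _ R; exact betti_zero R
  | succ i ih =>
    intro M _ _ R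
    rw [← show R.shift.b i = R.b (i + 1) from rfl, ← ih R.shift]
    symm
    refine (LinearEquiv.ofBijective ((aug_ses R).extClass.precompOfLinear A
      (ModuleCat.of A (ResidueField A)) (add_comm 1 i)) ⟨?_, ?_⟩).length_eq
    · rw [← LinearMap.ker_eq_bot, LinearMap.ker_eq_bot']
      intro x hx
      obtain ⟨z, rfl⟩ := Abelian.Ext.contravariant_sequence_exact₁ (aug_ses R) _ x (add_comm 1 i) hx
      match i with
      | 0 =>
        obtain ⟨φ, rfl⟩ := (Abelian.Ext.mk₀_bijective _ _).2 z
        rw [Abelian.Ext.mk₀_comp_mk₀, Abelian.Ext.mk₀_eq_zero_iff]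
        apply ModuleCat.hom_ext
        apply LinearMap.ext
        rintro ⟨y, hy⟩
        exact min_kill R φ.hom y hy
      | i + 1 => rw [Abelian.Ext.eq_zero_of_projective z, Abelian.Ext.comp_zero]
    · exact precomp_extClass_surjective_of_projective_X₂ _ (aug_ses R) i

lemma length_le_ker_add {A : Type u} [CommRing A] {P Q : Type u} [AddCommGroup P] [Module A P]
    [AddCommGroup Q] [Module A Q] (u : P →ₗ[A] Q) :
    Module.length A P ≤ Module.length A (LinearMap.ker u) + Module.length A Q := by
  rw [Module.length_eq_add_of_exact (LinearMap.ker u).subtype u.rangeRestrict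
    (Submodule.subtype_injective _) u.surjective_rangeRestrict
    (by intro x; simp [Subtype.ext_iff])]
  gcongr
  exact Module.length_le_of_injective (LinearMap.range u).subtype (Submodule.subtype_injective _)

lemma length_ker_comp {A : Type u} [CommRing A] {P Q T : Type u} [AddCommGroup P] [Module A P]
    [AddCommGroup Q] [Module A Q] [AddCommGroup T] [Module A T] (f : P →ₗ[A] Q) (g : Q →ₗ[A] T) :
    Module.length A (LinearMap.ker (g ∘ₗ f)) ≤
      Module.length A (LinearMap.ker f) + Module.length A (LinearMap.ker g) := by
  let u : LinearMap.ker (g ∘ₗ f) →ₗ[A] LinearMap.ker g := f.restrict (fun x hx => hx)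
  refine (length_le_ker_add u).trans ?_
  gcongr
  let v : LinearMap.ker u →ₗ[A] LinearMap.ker f :=
    ((LinearMap.ker (g ∘ₗ f)).subtype ∘ₗ (LinearMap.ker u).subtype).codRestrict _
      (fun x => congrArg Subtype.val x.2)
  refine Module.length_le_of_injective v ?_
  intro x y h
  apply Subtype.ext
  apply Subtype.ext
  exact congrArg (fun z : LinearMap.ker f => (z : P)) h

lemma syz_class {A : Type u} [CommRing A] [IsLocalRing A] (Y : ModuleCat.{u} A) (n : ℕ) :
    ∀ (M S : Type u) [AddCommGroup M] [Module A M] [AddCommGroup S] [Module A S],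
      IsSyzygyOf A M S n →
      ∃ σ : Abelian.Ext (ModuleCat.of A M) (ModuleCat.of A S) n,
        ∀ (i l : ℕ) (h : n + (i + 1) = l) (x : Abelian.Ext (ModuleCat.of A S) Y (i + 1)),
          σ.comp x h = 0 → x = 0 := by
  induction n with
  | zero =>
    rintro M S _ _ _ _ ⟨e⟩
    let e' : ModuleCat.of A S ≅ ModuleCat.of A M := e.toModuleIso
    refine ⟨Abelian.Ext.mk₀ e'.inv, fun i l h x hx => ?_⟩
    obtain rfl : i + 1 = l := by lia
    have : (Abelian.Ext.mk₀ e'.hom).comp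
        ((Abelian.Ext.mk₀ e'.inv).comp x (zero_add _)) (zero_add _) = x := by
      rw [Abelian.Ext.mk₀_comp_mk₀_assoc, Iso.hom_inv_id, Abelian.Ext.mk₀_id_comp]
    rw [← this, hx, Abelian.Ext.comp_zero]
  | succ n ih =>
    intro M S _ _ _ _ hS
    obtain ⟨R, hR⟩ := syz_succ n hS
    obtain ⟨σ, hσ⟩ := ih _ S hR
    refine ⟨(aug_ses R).extClass.comp σ (add_comm 1 n), fun i l h x hx => ?_⟩
    obtain rfl : 1 + n + (i + 1) = l := by lia
    rw [Abelian.Ext.comp_assoc _ _ _ _ rfl rfl] at hx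
    obtain ⟨z, hz⟩ := Abelian.Ext.contravariant_sequence_exact₁ (aug_ses R) _ _ _ hx
    apply hσ i _ rfl x
    rw [← hz]
    have : Subsingleton (Abelian.Ext (ModuleCat.of A (Fin (R.b 0) → A)) Y (n + (i + 1))) :=
      Abelian.Ext.subsingleton_of_projective _ _ (n + i)
    rw [this.elim z 0, Abelian.Ext.comp_zero]

lemma theta {A : Type u} [CommRing A] [IsLocalRing A] (Y N K S : ModuleCat.{u} A) (n : ℕ)
    (hsyz : IsSyzygyOf A N S n) (f : N →ₗ[A] K) (g : K →ₗ[A] S) (hses : IsSES f g) :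
    ∃ θ : Abelian.Ext N N (n + 1), ∀ (i l : ℕ) (h : n + 1 + i = l),
      Module.length A (LinearMap.ker (θ.precompOfLinear A Y h)) ≤
        Module.length A (Abelian.Ext K Y i) := by
  obtain ⟨σ, hσ⟩ := syz_class Y n N S hsyz
  have hS := sesC_shortExact f g hses.1 hses.2.1 hses.2.2
  refine ⟨σ.comp hS.extClass rfl, fun i l h => ?_⟩
  let w : Abelian.Ext K Y i →ₗ[A] Abelian.Ext N Y i :=
    (Abelian.Ext.mk₀ (ModuleCat.ofHom f)).precompOfLinear A Y (zero_add i)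
  have hle : LinearMap.ker ((σ.comp hS.extClass rfl).precompOfLinear A Y h) ≤
      LinearMap.range w := by
    intro x hx
    have hx' : (σ.comp hS.extClass rfl).comp x h = 0 := hx
    rw [Abelian.Ext.comp_assoc _ _ _ rfl (add_comm 1 i) h] at hx'
    have := hσ i l (by lia) _ hx'
    obtain ⟨z, hz⟩ := Abelian.Ext.contravariant_sequence_exact₁ hS _ _ _ this
    exact ⟨z, hz⟩
  exact (Module.length_le_of_injective _ (Submodule.inclusion_injective hle)).trans
    (Module.length_le_of_surjective _ w.surjective_rangeRestrict)

lemma theta_pow {A : Type u} [CommRing A] (Y N K : ModuleCat.{u} A) (s : ℕ)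
    (θ : Abelian.Ext N N s) (hθ : ∀ (i l : ℕ) (h : s + i = l),
      Module.length A (LinearMap.ker (θ.precompOfLinear A Y h)) ≤
        Module.length A (Abelian.Ext K Y i)) (m : ℕ) :
    ∃ T : Abelian.Ext N N (m * s), ∀ (i l : ℕ) (h : m * s + i = l),
      Module.length A (LinearMap.ker (T.precompOfLinear A Y h)) ≤
        ∑ j ∈ Finset.range m, Module.length A (Abelian.Ext K Y (i + j * s)) := by
  induction m with
  | zero =>
    have h0 : 0 = 0 * s := by lia
    refine ⟨h0 ▸ Abelian.Ext.mk₀ (𝟙 N), ?_⟩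
    generalize 0 * s = z at h0
    subst h0
    intro i l h
    obtain rfl : i = l := by lia
    have : LinearMap.ker ((Abelian.Ext.mk₀ (𝟙 N)).precompOfLinear A Y h) = ⊥ := by
      rw [LinearMap.ker_eq_bot']
      intro x hx
      exact (Abelian.Ext.mk₀_id_comp x).symm.trans hx
    simp only
    rw [this]
    simp
  | succ m ih =>
    obtain ⟨T, hT⟩ := ih
    refine ⟨T.comp θ (by lia), fun i l h => ?_⟩
    have h' : m * s + (s + i) = l := by lia
    have : (T.comp θ (by lia : m * s + s = (m + 1) * s)).precompOfLinear A Y h =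
        T.precompOfLinear A Y h' ∘ₗ θ.precompOfLinear A Y rfl := by
      apply LinearMap.ext
      intro x
      exact Abelian.Ext.comp_assoc _ _ _ _ rfl (by lia)
    rw [this]
    refine (length_ker_comp _ _).trans ?_
    rw [Finset.sum_range_succ', add_comm]
    refine add_le_add ((hT _ _ h').trans (Finset.sum_le_sum fun j _ => ?_)) ?_
    · rw [show s + i + j * s = i + (j + 1) * s by lia]
    · rw [zero_mul, add_zero]
      exact hθ i _ rfl

lemma no_self {A : Type u} [CommRing A] [IsLocalRing A] (N : ModuleCat.{u} A)
    (hN : HasRedCxCat N) (h0 : 0 < complexity A N)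
    (h : ∀ᶠ i in atTop, Subsingleton (Abelian.Ext N N i)) : False := by
  cases hN with
  | of_finite_projDim _ hfg hp => rw [complexity_eq_zero hp] at h0; exact lt_irrefl _ h0
  | step _ K S n hfg hKfg hpos hfin hsyz f g hses hcx hdepth hK =>
  obtain ⟨c, hc⟩ := ENat.ne_top_iff_exists.1 hfin
  have hcK : complexity A K = ((c - 1 : ℕ) : ℕ∞) := by rw [hcx, ← hc]; norm_cast
  obtain ⟨R, -, -⟩ := hasComplexityLE_of_eq hc.symm
  obtain ⟨RK, a, ha⟩ := hasComplexityLE_of_eq hcK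
  obtain ⟨θ, hθ⟩ := theta (ModuleCat.of A (ResidueField A)) N K S n hsyz f g hses
  obtain ⟨m, hm⟩ := eventually_atTop.1 h
  obtain ⟨T, hT⟩ := theta_pow _ N K (n + 1) θ hθ m
  have hT0 : T = 0 := (hm _ (Nat.le_mul_of_pos_right m (by lia))).elim _ _
  have H : ∀ i, R.b i ≤ ∑ j ∈ Finset.range m, RK.b (i + j * (n + 1)) := by
    intro i
    have h1 := hT i _ rfl
    have h2 : LinearMap.ker (T.precompOfLinear A (ModuleCat.of A (ResidueField A))
        (rfl : m * (n + 1) + i = _)) = ⊤ := by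
      rw [hT0, LinearMap.ker_eq_top]
      apply LinearMap.ext
      intro x
      exact Abelian.Ext.zero_comp (X := N) (n := m * (n + 1)) x _ rfl
    rw [h2, Module.length_top] at h1
    have h3 := betti i R
    have h4 : ∀ j, Module.length A (Abelian.Ext K (ModuleCat.of A (ResidueField A)) j) = RK.b j :=
      fun j => betti j RK
    simp only [h4] at h1
    have h5 : (R.b i : ℕ∞) ≤ _ := h3.symm.le.trans h1
    exact_mod_cast h5
  obtain ⟨a', ha'⟩ := growth _ _ m (n + 1) H a _ ha
  have hle : complexity A N ≤ ((c - 1 : ℕ) : ℕ∞) := complexity_le ⟨R, a', ha'⟩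
  rw [← hc] at hle hpos
  norm_cast at hle hpos
  lia

end ComplexityTest

/-- **Corollary 3.5**: let `A` be a Gorenstein local ring, `M` a module of reducible
complexity and `t` a (positive) natural number. If `Ext^i_A(N,M) = 0` for `i ≫ 0` for
every module `N` of reducible complexity with `cx N = t`, then `cx M < t`. -/
theorem complexity_lt_of_extVanish_into_rc_of_gorenstein
    (A : Type u) [CommRing A] [IsLocalRing A] [IsNoetherianRing A]
    (hA : IsGorenstein A)
    (M : Type u) [AddCommGroup M] [Module A M] [Module.Finite A M]
    (hM : HasRedCx A M)
    (t : ℕ) (ht : 0 < t)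
    (h : ∀ (N : Type u) [AddCommGroup N] [Module A N] [Module.Finite A N],
      HasRedCx A N → complexity A N = t →
        ∀ᶠ i in Filter.atTop, extVanish A N i M) :
    complexity A M < (t : ℕ∞) := by
  by_contra hlt
  obtain ⟨N, hN, hfin, hcN, hX⟩ := chain (ModuleCat.of A M) hM t ht (not_lt.1 hlt)
  have h1 := h N hN hcN
  refine no_self N hN (by rw [hcN]; exact_mod_cast ht) (hX N ?_ ?_)
  · obtain ⟨n, hn⟩ := ext_gor hA
    exact eventually_atTop.2 ⟨n + 1, fun i hi => hn N i (by lia)⟩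
  · filter_upwards [h1, eventually_ge_atTop 1] with i hi hi1
    obtain ⟨j, rfl⟩ : ∃ j, i = j + 1 := ⟨i - 1, by lia⟩
    exact (extVanish_iff A N M j).1 hi
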